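/- arXiv:1508.04589 — 2 statements merged into one kernel-verified Lean document; each statement's English description precedes it below -/
import Mathlib

section
/- Let Q ∈ (0,1) and let z ∈ ℂ with Q < |z| < 1. Then (1/(2πi)) ∮_{|ξ|=1} (1/ξ + Qξ)(1 − Q/ξ²) / ((ξ + Q/ξ) − (z + Q/z)) dξ = Q(z + Q/z). Equivalently, writing the integrand as (1 + Qξ²)(ξ² − Q)/(ξ²(ξ − z)(ξ − Q/z)), the contour integral over the unit circle equals Q(z + Q/z). -/
/-! Since `α ξ - α z = (ξ - z) (ξ - q / z) / ξ` for the Joukowski map `α ξ = ξ + q / ξ`, its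
logarithmic derivative in `ξ` is `1 / (ξ - z) + 1 / (ξ - q / z) - 1 / ξ`, with all three poles
inside the circle.
Against a factor `1 / ξ` each of them integrates to zero, because `1 / (ξ (ξ - w))` has residues of
total zero; against a holomorphic `g` Cauchy's formula gives `2πi (g z + g (q / z) - g 0)`.
-/

open Metric Complex

section CauchyKernel

variable {c u w : ℂ} {R : ℝ}

lemma sub_ne_zero_of_mem_sphere_of_mem_ball {ξ : ℂ} (hξ : ξ ∈ sphere c R) (hw : w ∈ ball c R) :
    ξ - w ≠ 0 :=
  sub_ne_zero.2 (ne_of_mem_of_not_mem hw (sphere_disjoint_ball.notMem_of_mem_left hξ)).symm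

lemma continuousOn_inv_sub_sphere (hw : w ∈ ball c R) :
    ContinuousOn (fun ξ : ℂ ↦ (ξ - w)⁻¹) (sphere c R) :=
  (continuousOn_id.sub continuousOn_const).inv₀ fun _ hξ ↦
    sub_ne_zero_of_mem_sphere_of_mem_ball hξ hw

lemma circleIntegral_inv_sub_mul_inv_sub (hu : u ∈ ball c R) (hw : w ∈ ball c R) :
    (∮ ξ in C(c, R), (ξ - w)⁻¹ * (ξ - u)⁻¹) = 0 := by
  have hR : 0 ≤ R := (pos_of_mem_ball hw).le
  obtain rfl | hne := eq_or_ne w u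
  · simpa only [zpow_neg, zpow_ofNat, sq, mul_inv] using
      circleIntegral.integral_sub_zpow_of_ne (n := -2) (by decide) c w R
  · have partial_fractions : Set.EqOn (fun ξ : ℂ ↦ (ξ - w)⁻¹ * (ξ - u)⁻¹)
        (fun ξ ↦ (w - u)⁻¹ * ((ξ - w)⁻¹ - (ξ - u)⁻¹)) (sphere c R) := fun ξ hξ ↦ by
      have hξw := sub_ne_zero_of_mem_sphere_of_mem_ball hξ hw
      have hξu := sub_ne_zero_of_mem_sphere_of_mem_ball hξ hu
      have hwu := sub_ne_zero.2 hne
      field_simp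
      ring
    rw [circleIntegral.integral_congr hR partial_fractions, circleIntegral.integral_const_mul,
      circleIntegral.integral_sub ((continuousOn_inv_sub_sphere hw).circleIntegrable hR)
        ((continuousOn_inv_sub_sphere hu).circleIntegrable hR),
      circleIntegral.integral_sub_inv_of_mem_ball hw,
      circleIntegral.integral_sub_inv_of_mem_ball hu, sub_self, mul_zero]

lemma circleIntegral_inv_sub_mul_inv_sub_add {g : ℂ → ℂ} (hg : DiffContOnCl ℂ g (ball c R))
    (hu : u ∈ ball c R) (hw : w ∈ ball c R) :
    (∮ ξ in C(c, R), (ξ - w)⁻¹ * ((ξ - u)⁻¹ + g ξ)) = 2 * Real.pi * I * g w := by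
  have hR : 0 ≤ R := (pos_of_mem_ball hw).le
  have hgc : ContinuousOn g (sphere c R) := hg.continuousOn_ball.mono sphere_subset_closedBall
  have hwc := continuousOn_inv_sub_sphere hw
  have cauchy : (∮ ξ in C(c, R), (ξ - w)⁻¹ * g ξ) = 2 * Real.pi * I * g w := by
    simpa only [smul_eq_mul] using hg.circleIntegral_sub_inv_smul hw
  simp only [mul_add]
  rw [circleIntegral.integral_add
      ((hwc.fun_mul (continuousOn_inv_sub_sphere hu)).circleIntegrable hR)
      ((hwc.fun_mul hgc).circleIntegrable hR),
    circleIntegral_inv_sub_mul_inv_sub hu hw, cauchy, zero_add]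

end CauchyKernel

/-- The Joukowski map `α_q`, which for `q ∈ (0, 1)` sends the unit circle to an ellipse; it is
defined for all `ξ` with the convention `q / 0 = 0`. -/
noncomputable def joukowski (q ξ : ℂ) : ℂ := ξ + q / ξ

section Joukowski

variable {q z ξ : ℂ}

lemma hasDerivAt_joukowski (q : ℂ) (hξ : ξ ≠ 0) :
    HasDerivAt (joukowski q) (1 - q / ξ ^ 2) ξ :=
  ((hasDerivAt_id ξ).add ((hasDerivAt_inv hξ).const_mul q)).congr_deriv (by ring)

lemma joukowski_sub_joukowski (q : ℂ) (hξ : ξ ≠ 0) (hz : z ≠ 0) :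
    joukowski q ξ - joukowski q z = (ξ - z) * (ξ - q / z) / ξ := by
  unfold joukowski
  field_simp
  ring

lemma logDeriv_joukowski_sub (q : ℂ) (hξ : ξ ≠ 0) :
    logDeriv (fun ζ ↦ joukowski q ζ - joukowski q z) ξ =
      (1 - q / ξ ^ 2) / (joukowski q ξ - joukowski q z) := by
  rw [logDeriv_apply, ((hasDerivAt_joukowski q hξ).sub_const _).deriv]

lemma logDeriv_joukowski_sub_eq_sum_inv (hξ : ξ ≠ 0) (hz : z ≠ 0) (hξz : ξ - z ≠ 0)
    (hξw : ξ - q / z ≠ 0) :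
    logDeriv (fun ζ ↦ joukowski q ζ - joukowski q z) ξ =
      (ξ - z)⁻¹ + (ξ - q / z)⁻¹ - ξ⁻¹ := by
  have factorization : (fun ζ ↦ joukowski q ζ - joukowski q z) =ᶠ[nhds ξ]
      fun ζ ↦ (ζ - z) * (ζ - q / z) / ζ := by
    filter_upwards [eventually_ne_nhds hξ] with ζ hζ using joukowski_sub_joukowski q hζ hz
  have logDeriv_sub_const (w : ℂ) : logDeriv (fun ζ ↦ ζ - w) ξ = (ξ - w)⁻¹ := by
    simp [logDeriv_apply]
  rw [(logDeriv_congr_nhds factorization).eq_of_nhds,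
    logDeriv_div (f := fun ζ ↦ (ζ - z) * (ζ - q / z)) ξ (mul_ne_zero hξz hξw) hξ
      (by fun_prop) (by fun_prop),
    logDeriv_mul (f := fun ζ ↦ ζ - z) ξ hξz hξw (by fun_prop) (by fun_prop),
    logDeriv_sub_const, logDeriv_sub_const, logDeriv_id', one_div]

lemma circleIntegral_mul_logDeriv_joukowski_sub {R : ℝ} {h : ℂ → ℂ}
    (hh : ContinuousOn h (sphere 0 R)) (hz0 : z ≠ 0) (hz : z ∈ ball 0 R)
    (hw : q / z ∈ ball 0 R) :
    (∮ ξ in C(0, R), h ξ * logDeriv (fun ζ ↦ joukowski q ζ - joukowski q z) ξ) =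
      (∮ ξ in C(0, R), (ξ - z)⁻¹ * h ξ) + (∮ ξ in C(0, R), (ξ - q / z)⁻¹ * h ξ) -
        ∮ ξ in C(0, R), ξ⁻¹ * h ξ := by
  have hRpos : 0 < R := pos_of_mem_ball hz
  have h0 : (0 : ℂ) ∈ ball 0 R := mem_ball_self hRpos
  have integrable {v : ℂ} (hv : v ∈ ball 0 R) :
      CircleIntegrable (fun ξ ↦ (ξ - v)⁻¹ * h ξ) 0 R :=
    ((continuousOn_inv_sub_sphere hv).mul hh).circleIntegrable hRpos.le
  have integrable_zero : CircleIntegrable (fun ξ ↦ ξ⁻¹ * h ξ) 0 R := by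
    simpa only [sub_zero] using integrable h0
  rw [← circleIntegral.integral_add (integrable hz) (integrable hw),
    ← circleIntegral.integral_sub ((integrable hz).fun_add (integrable hw)) integrable_zero]
  refine circleIntegral.integral_congr hRpos.le fun ξ hξ ↦ ?_
  have hξ0 : ξ ≠ 0 := ne_of_mem_sphere hξ hRpos.ne'
  rw [logDeriv_joukowski_sub_eq_sum_inv hξ0 hz0 (sub_ne_zero_of_mem_sphere_of_mem_ball hξ hz)
    (sub_ne_zero_of_mem_sphere_of_mem_ball hξ hw)]
  ring

lemma circleIntegral_inv_add_mul_logDeriv_joukowski_sub {R : ℝ} {g : ℂ → ℂ}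
    (hg : DiffContOnCl ℂ g (ball 0 R)) (hz0 : z ≠ 0) (hz : z ∈ ball 0 R)
    (hw : q / z ∈ ball 0 R) :
    (∮ ξ in C(0, R), (ξ⁻¹ + g ξ) * logDeriv (fun ζ ↦ joukowski q ζ - joukowski q z) ξ) =
      2 * Real.pi * I * (g z + g (q / z) - g 0) := by
  have h0 : (0 : ℂ) ∈ ball 0 R := mem_ball_self (pos_of_mem_ball hz)
  have hcont : ContinuousOn (fun ξ ↦ ξ⁻¹ + g ξ) (sphere 0 R) := by
    simpa only [sub_zero] using (continuousOn_inv_sub_sphere h0).fun_add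
      (hg.continuousOn_ball.mono sphere_subset_closedBall)
  have cauchy {v : ℂ} (hv : v ∈ ball 0 R) :
      (∮ ξ in C(0, R), (ξ - v)⁻¹ * (ξ⁻¹ + g ξ)) = 2 * Real.pi * I * g v := by
    simpa only [sub_zero] using circleIntegral_inv_sub_mul_inv_sub_add hg h0 hv
  have cauchy_zero : (∮ ξ in C(0, R), ξ⁻¹ * (ξ⁻¹ + g ξ)) = 2 * Real.pi * I * g 0 := by
    simpa only [sub_zero] using cauchy h0
  rw [circleIntegral_mul_logDeriv_joukowski_sub hcont hz0 hz hw, cauchy hz, cauchy hw,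
    cauchy_zero]
  ring

end Joukowski

theorem ellipse_I2_integral_general {q z : ℂ} {R : ℝ} {g : ℂ → ℂ}
    (hg : DiffContOnCl ℂ g (ball 0 R)) (hqz : ‖q‖ < R * ‖z‖) (hzR : ‖z‖ < R) :
    (∮ ξ in C(0, R), (1 / ξ + g ξ) * (1 - q / ξ ^ 2) / ((ξ + q / ξ) - (z + q / z))) /
      (2 * Real.pi * I) = g z + g (q / z) - g 0 := by
  have hR : 0 < R := (norm_nonneg z).trans_lt hzR
  have hz_pos : 0 < ‖z‖ := pos_of_mul_pos_right ((norm_nonneg q).trans_lt hqz) hR.le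
  have hz : z ∈ ball 0 R := mem_ball_zero_iff.2 hzR
  have hw : q / z ∈ ball 0 R := by rwa [mem_ball_zero_iff, norm_div, div_lt_iff₀ hz_pos]
  rw [div_eq_iff two_pi_I_ne_zero, mul_comm,
    ← circleIntegral_inv_add_mul_logDeriv_joukowski_sub hg (norm_pos_iff.1 hz_pos) hz hw]
  refine circleIntegral.integral_congr hR.le fun ξ hξ ↦ ?_
  have hξ0 : ξ ≠ 0 := ne_of_mem_sphere hξ hR.ne'
  rw [logDeriv_joukowski_sub q hξ0, one_div, mul_div_assoc, joukowski, joukowski]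

/-- Residue computation of the term `I₂`: for `Q ∈ (0,1)` and `Q < |z| < 1`,
`(1/2πi) ∮_{|ξ|=1} conj(α_Q)(ξ) α_Q'(ξ)/(α_Q(ξ) - α_Q(z)) dξ = Q(z + Q/z)`,
where `α_Q(ξ) = ξ + Q/ξ` and on the circle `conj α_Q(ξ) = 1/ξ + Qξ`. -/
theorem ellipse_I2_integral (Q : ℝ) (hQ : Q ∈ Set.Ioo (0:ℝ) 1) (z : ℂ)
    (hz1 : Q < ‖z‖) (hz2 : ‖z‖ < 1) :
    (∮ ξ in C(0, 1),
        (1 / ξ + (Q : ℂ) * ξ) * (1 - (Q : ℂ) / ξ ^ 2) /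
          ((ξ + (Q : ℂ) / ξ) - (z + (Q : ℂ) / z)))
      / (2 * Real.pi * Complex.I) = (Q : ℂ) * (z + (Q : ℂ) / z) := by
  have hg : DiffContOnCl ℂ (fun ξ ↦ (Q : ℂ) * ξ) (ball 0 1) :=
    (differentiable_id.const_mul (Q : ℂ)).diffContOnCl
  have hqz : ‖(Q : ℂ)‖ < 1 * ‖z‖ := by rwa [one_mul, Complex.norm_of_nonneg hQ.1.le]
  rw [ellipse_I2_integral_general hg hqz hz2]
  ring
end

section
/- Let ε ∈ (0,1), α ∈ (0,1), Q ∈ (0, ε]. Let f and g be holomorphic on the open unit disc such that f, f′, g, g′ extend continuously to the closed unit disc with sup_{|z|≤1}|f′(z)| ≤ (1−ε)/2 and sup_{|z|≤1}|g′(z)| ≤ (1−ε)/2, and set Φ_f(w) = w + Q/w + f(w), Φ_g(w) = w + Q/w + g(w) for w ∈ 𝕋. Define, for h holomorphic on the disc with h′ continuous up to the closed disc, I₁(f)h(w) = (1/(2πi))∮_{|ξ|=1} (conj(Φ_f(ξ)) − conj(Φ_f(w)))/(Φ_f(ξ) − Φ_f(w)) h′(ξ) dξ, and analogously I₁(g)h.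 Then there is a constant C = C(ε, α), independent of f, g, Q and h, such that ‖I₁(f)h − I₁(g)h‖_{C^α(𝕋)} ≤ C·( sup_{|z|≤1}|f′(z) − g′(z)| )·( sup_{ξ∈𝕋}|h′(ξ)| ). -/
open Metric

/-- The singular integral `I₁(f)h(w) = (1/2πi)∮_{|ξ|=1}
(conj Φ_f(ξ) - conj Φ_f(w))/(Φ_f(ξ) - Φ_f(w)) · h'(ξ) dξ` with
`Φ_f(w) = w + Q/w + f(w)`. -/
noncomputable def I1Int (Q : ℝ) (f h' : ℂ → ℂ) (w : ℂ) : ℂ :=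
  (∮ ξ in C(0, 1),
      (starRingEnd ℂ (ξ + (Q : ℂ) / ξ + f ξ) - starRingEnd ℂ (w + (Q : ℂ) / w + f w)) /
        ((ξ + (Q : ℂ) / ξ + f ξ) - (w + (Q : ℂ) / w + f w)) * h' ξ) /
    (2 * Real.pi * Complex.I)

/-!
With `u = Φ_f - Φ_g = f - g`, the kernels of `I₁(f)` and `I₁(g)` differ by
`conj Δu / ΔΦ_f - (Δu / ΔΦ_f) * (conj ΔΦ_g / ΔΦ_g)`, where `Δφ = φ(ξ) - φ(w)`. Each factor is a
difference quotient of a Lipschitz map by a bi-Lipschitz one, hence bounded, with increments in `w`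
of size `|w₁ - w₂| / |ξ - w₁|`; those involving `u` carry the factor `Lip(u) ≤ sup |f' - g'|`.
Interpolating the two bounds, the difference of kernels has increments of size
`Lip(u) * |w₁ - w₂| ^ α * |ξ - w₁| ^ (-α)`, which is integrable in `ξ` over the circle.
-/

open MeasureTheory Set Complex
open scoped NNReal ComplexConjugate Real

theorem lipschitzOnWith_sphere_of_norm_hasDerivAt_le {G : Type*} [NormedAddCommGroup G]
    [NormedSpace ℂ G] {f f' : ℂ → G} {c : ℂ} {R : ℝ} {K : ℝ≥0} (hR : R ≠ 0)
    (hc : ContinuousOn f (closedBall c R)) (hd : ∀ z ∈ ball c R, HasDerivAt f (f' z) z)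
    (hK : ∀ z ∈ ball c R, ‖f' z‖ ≤ K) : LipschitzOnWith K f (sphere c R) := by
  have hball : LipschitzOnWith K f (ball c R) :=
    (convex_ball c R).lipschitzOnWith_of_nnnorm_hasDerivWithin_le
      (fun z hz => (hd z hz).hasDerivWithinAt) hK
  rw [← closure_ball c hR] at hc
  exact (hball.closure hc).mono (closure_ball c hR ▸ sphere_subset_closedBall)

theorem mul_rpow_le_mul_rpow_of_mul_le_mul {α x r A t : ℝ} (hα : α ∈ Icc (0 : ℝ) 1) (hx : 0 ≤ x)
    (hr : 0 ≤ r) (ht : 0 ≤ t) (hxA : x ≤ A) (hxr : x * r ≤ A * t) : x * r ^ α ≤ A * t ^ α := by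
  have hA : 0 ≤ A := hx.trans hxA
  have hα' : 0 ≤ 1 - α := sub_nonneg.2 hα.2
  have hsplit {y s : ℝ} (hy : 0 ≤ y) (hs : 0 ≤ s) : y * s ^ α = y ^ (1 - α) * (y * s) ^ α := by
    rw [Real.mul_rpow hy hs, ← mul_assoc, ← Real.rpow_add_of_nonneg hy hα' hα.1,
      sub_add_cancel, Real.rpow_one]
  rw [hsplit hx hr, hsplit hA ht]
  gcongr
  exact hα.1

/-- The distance between two points of the unit circle at angle `θ`. -/
noncomputable def chordLength (θ : ℝ) : ℝ := |2 * Real.sin (θ / 2)|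

theorem chordLength_nonneg (θ : ℝ) : 0 ≤ chordLength θ := abs_nonneg _

theorem continuous_chordLength : Continuous chordLength := by
  unfold chordLength
  fun_prop

theorem chordLength_neg (θ : ℝ) : chordLength (-θ) = chordLength θ := by
  simp only [chordLength, neg_div, Real.sin_neg, mul_neg, abs_neg]

theorem periodic_chordLength : Function.Periodic chordLength (2 * π) := fun θ => by
  rw [chordLength, add_div, mul_div_cancel_left₀ _ two_ne_zero, Real.sin_add_pi, mul_neg, abs_neg,
    chordLength]

theorem periodic_chordLength_rpow (s : ℝ) :
    Function.Periodic (fun θ => chordLength θ ^ s) (2 * π) :=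
  periodic_chordLength.comp (· ^ s)

theorem two_div_pi_mul_le_chordLength {θ : ℝ} (h₀ : 0 ≤ θ) (hπ : θ ≤ π) :
    2 / π * θ ≤ chordLength θ := by
  have hsin : 2 / π * (θ / 2) ≤ Real.sin (θ / 2) :=
    Real.mul_le_sin (by linarith) (by linarith)
  exact le_trans (by linarith) (le_abs_self _)

theorem norm_circleMap_sub_circleMap (c : ℂ) (R θ φ : ℝ) :
    ‖circleMap c R θ - circleMap c R φ‖ = |R| * chordLength (θ - φ) := by
  have hfactor : circleMap c R θ - circleMap c R φ =
      circleMap 0 R φ * (exp (I * (θ - φ : ℝ)) - 1) := by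
    simp only [circleMap, zero_add, add_sub_add_left_eq_sub, mul_sub, mul_one, mul_assoc,
      ← Complex.exp_add]
    push_cast
    ring_nf
  rw [hfactor, norm_mul, norm_circleMap_zero, norm_exp_I_mul_ofReal_sub_one, Real.norm_eq_abs,
    chordLength]

theorem intervalIntegrable_chordLength_rpow {s : ℝ} (hs : -1 < s) (a b : ℝ) :
    IntervalIntegrable (fun θ => chordLength θ ^ s) volume a b := by
  rcases le_total 0 s with hs₀ | hs₀
  · exact (continuous_chordLength.rpow_const fun _ => .inr hs₀).intervalIntegrable a b
  have hright : IntervalIntegrable (fun θ => chordLength θ ^ s) volume 0 π := by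
    have hdom : IntervalIntegrable (fun θ : ℝ => (2 / π) ^ s * θ ^ s) volume 0 π :=
      (intervalIntegral.intervalIntegrable_rpow' hs).const_mul _
    refine hdom.mono_fun (continuous_chordLength.measurable.pow_const _).aestronglyMeasurable ?_
    refine (ae_restrict_iff' measurableSet_uIoc).2 (.of_forall fun θ hθ => ?_)
    rw [uIoc_of_le Real.pi_pos.le] at hθ
    have hpos : 0 < 2 / π * θ := mul_pos (by positivity) hθ.1
    beta_reduce
    rw [← Real.mul_rpow (by positivity) hθ.1.le,
      Real.norm_of_nonneg (Real.rpow_nonneg (chordLength_nonneg θ) s),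
      Real.norm_of_nonneg (Real.rpow_nonneg hpos.le s)]
    exact Real.rpow_le_rpow_of_nonpos hpos (two_div_pi_mul_le_chordLength hθ.1.le hθ.2) hs₀
  have hleft : IntervalIntegrable (fun θ => chordLength θ ^ s) volume (-π) 0 := by
    simpa only [chordLength_neg, neg_zero] using (IntervalIntegrable.iff_comp_neg).1 hright |>.symm
  refine (periodic_chordLength_rpow s).intervalIntegrable (t := -π)
    Real.two_pi_pos.ne' ?_ a b
  rw [show -π + 2 * π = π by ring]
  exact hleft.trans hright

/-- The integral `∫ |ξ - 1| ^ s |dξ|` over the unit circle. -/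
noncomputable def chordIntegral (s : ℝ) : ℝ := ∫ θ in (0 : ℝ)..2 * π, chordLength θ ^ s

theorem chordIntegral_nonneg (s : ℝ) : 0 ≤ chordIntegral s :=
  intervalIntegral.integral_nonneg Real.two_pi_pos.le fun θ _ =>
    Real.rpow_nonneg (chordLength_nonneg θ) s

theorem integral_chordLength_sub_rpow (s φ : ℝ) :
    ∫ θ in (0 : ℝ)..2 * π, chordLength (θ - φ) ^ s = chordIntegral s := by
  rw [intervalIntegral.integral_comp_sub_right (fun θ => chordLength θ ^ s) φ, chordIntegral]
  simpa only [zero_add, zero_sub, neg_add_eq_sub] using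
    (periodic_chordLength_rpow s).intervalIntegral_add_eq (-φ) 0

theorem norm_circleIntegral_le_of_norm_le_rpow {E : Type*} [NormedAddCommGroup E] [NormedSpace ℂ E]
    {s : ℝ} (hs : -1 < s) {G : ℂ → E} {B : ℝ} {c : ℂ} {R : ℝ} (hR : 0 < R) {w : ℂ}
    (hw : w ∈ sphere c R) (hG : ∀ ξ ∈ sphere c R, ξ ≠ w → ‖G ξ‖ ≤ B * ‖ξ - w‖ ^ s) :
    ‖∮ ξ in C(c, R), G ξ‖ ≤ R ^ (1 + s) * B * chordIntegral s := by
  obtain ⟨φ, rfl⟩ : w ∈ range (circleMap c R) := by rwa [range_circleMap, abs_of_pos hR]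
  rw [← integral_chordLength_sub_rpow s φ, ← intervalIntegral.integral_const_mul, circleIntegral]
  have hint : IntervalIntegrable (fun θ => chordLength (θ - φ) ^ s) volume 0 (2 * π) := by
    simpa only [sub_add_cancel] using
      (intervalIntegrable_chordLength_rpow hs (0 - φ) (2 * π - φ)).comp_sub_right φ
  refine intervalIntegral.norm_integral_le_of_norm_le Real.two_pi_pos.le ?_ (hint.const_mul _)
  have hne : ∀ᵐ θ : ℝ, θ ∉ circleMap c R ⁻¹' {circleMap c R φ} :=
    ((countable_singleton _).preimage_circleMap c hR.ne').ae_notMem _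
  filter_upwards [hne] with θ hθ _
  calc ‖deriv (circleMap c R) θ • G (circleMap c R θ)‖
      = R * ‖G (circleMap c R θ)‖ := by
        simp only [norm_smul, deriv_circleMap, norm_mul, norm_circleMap_zero, norm_I, mul_one,
          abs_of_pos hR]
    _ ≤ R * (B * (R * chordLength (θ - φ)) ^ s) := by
        gcongr
        simpa only [norm_circleMap_sub_circleMap, abs_of_pos hR] using
          hG _ (circleMap_mem_sphere c hR.le θ) hθ
    _ = R ^ (1 + s) * B * chordLength (θ - φ) ^ s := by
        rw [Real.mul_rpow hR.le (chordLength_nonneg _), Real.rpow_one_add' hR.le (by linarith)]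
        ring

/-- A kernel of order zero with constant `B`: it is bounded by `B` and its increments in the second
variable are bounded by `B * dist y₁ y₂ / dist x y₁`, as for a kernel with
`|∂k/∂y (x, y)| ≲ |x - y|⁻¹`. The second bound is written without division so that it also makes
sense on the diagonal `x = y₁`. -/
structure IsZeroOrderKernel {X F : Type*} [PseudoMetricSpace X] [SeminormedAddCommGroup F]
    (k : X → X → F) (B : ℝ≥0) : Prop where
  norm_le : ∀ x y, ‖k x y‖ ≤ B
  norm_sub_mul_dist_le : ∀ x y₁ y₂, ‖k x y₁ - k x y₂‖ * dist x y₁ ≤ B * dist y₁ y₂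

namespace IsZeroOrderKernel

section Algebra

variable {X : Type*} [PseudoMetricSpace X] {B₁ B₂ : ℝ≥0}

theorem sub {F : Type*} [SeminormedAddCommGroup F] {k₁ k₂ : X → X → F}
    (h₁ : IsZeroOrderKernel k₁ B₁) (h₂ : IsZeroOrderKernel k₂ B₂) :
    IsZeroOrderKernel (fun x y => k₁ x y - k₂ x y) (B₁ + B₂) where
  norm_le x y := norm_sub_le_of_le (h₁.norm_le x y) (h₂.norm_le x y)
  norm_sub_mul_dist_le x y₁ y₂ := by
    rw [sub_sub_sub_comm]
    calc ‖k₁ x y₁ - k₁ x y₂ - (k₂ x y₁ - k₂ x y₂)‖ * dist x y₁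
        ≤ (‖k₁ x y₁ - k₁ x y₂‖ + ‖k₂ x y₁ - k₂ x y₂‖) * dist x y₁ := by
          gcongr
          exact norm_sub_le _ _
      _ ≤ B₁ * dist y₁ y₂ + B₂ * dist y₁ y₂ := by
          rw [add_mul]
          exact add_le_add (h₁.norm_sub_mul_dist_le x y₁ y₂) (h₂.norm_sub_mul_dist_le x y₁ y₂)
      _ = (B₁ + B₂ : ℝ≥0) * dist y₁ y₂ := by
          push_cast
          ring

theorem mul {F : Type*} [SeminormedRing F] {k₁ k₂ : X → X → F}
    (h₁ : IsZeroOrderKernel k₁ B₁) (h₂ : IsZeroOrderKernel k₂ B₂) :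
    IsZeroOrderKernel (fun x y => k₁ x y * k₂ x y) (2 * B₁ * B₂) where
  norm_le x y := by
    calc ‖k₁ x y * k₂ x y‖ ≤ B₁ * B₂ := norm_mul_le_of_le (h₁.norm_le x y) (h₂.norm_le x y)
      _ ≤ (2 * B₁ * B₂ : ℝ≥0) := by
        push_cast
        nlinarith [mul_nonneg B₁.coe_nonneg B₂.coe_nonneg]
  norm_sub_mul_dist_le x y₁ y₂ := by
    have hsplit : k₁ x y₁ * k₂ x y₁ - k₁ x y₂ * k₂ x y₂ =
        (k₁ x y₁ - k₁ x y₂) * k₂ x y₁ + k₁ x y₂ * (k₂ x y₁ - k₂ x y₂) := by noncomm_ring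
    calc ‖k₁ x y₁ * k₂ x y₁ - k₁ x y₂ * k₂ x y₂‖ * dist x y₁
        ≤ (‖k₁ x y₁ - k₁ x y₂‖ * B₂ + B₁ * ‖k₂ x y₁ - k₂ x y₂‖) * dist x y₁ := by
          rw [hsplit]
          gcongr
          exact norm_add_le_of_le (norm_mul_le_of_le le_rfl (h₂.norm_le x y₁))
            (norm_mul_le_of_le (h₁.norm_le x y₂) le_rfl)
      _ = (‖k₁ x y₁ - k₁ x y₂‖ * dist x y₁) * B₂ + B₁ * (‖k₂ x y₁ - k₂ x y₂‖ * dist x y₁) := by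
          ring
      _ ≤ B₁ * dist y₁ y₂ * B₂ + B₁ * (B₂ * dist y₁ y₂) := by
          gcongr ?_ * _ + _ * ?_
          · exact h₁.norm_sub_mul_dist_le x y₁ y₂
          · exact h₂.norm_sub_mul_dist_le x y₁ y₂
      _ = (2 * B₁ * B₂ : ℝ≥0) * dist y₁ y₂ := by
          push_cast
          ring

theorem norm_sub_mul_rpow_le {F : Type*} [SeminormedAddCommGroup F] {k : X → X → F}
    {B : ℝ≥0} (hk : IsZeroOrderKernel k B) {α : ℝ} (hα : α ∈ Icc (0 : ℝ) 1) (x y₁ y₂ : X) :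
    ‖k x y₁ - k x y₂‖ * dist x y₁ ^ α ≤ 2 * B * dist y₁ y₂ ^ α := by
  refine mul_rpow_le_mul_rpow_of_mul_le_mul hα (norm_nonneg _) dist_nonneg dist_nonneg ?_ ?_
  · linarith [norm_sub_le_of_le (hk.norm_le x y₁) (hk.norm_le x y₂)]
  · refine (hk.norm_sub_mul_dist_le x y₁ y₂).trans ?_
    gcongr
    linarith [B.coe_nonneg]

end Algebra

section CircleIntegral

variable {E : Type*} [NormedAddCommGroup E] [NormedSpace ℂ E]
variable {k : ℂ → ℂ → ℂ} {h : ℂ → E} {c : ℂ} {R M : ℝ} {B : ℝ≥0} {w w₁ w₂ : ℂ}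

theorem norm_two_pi_I_inv_smul_circleIntegral_le
    (hk : IsZeroOrderKernel (fun x y : sphere c R => k x y) B) (hR : 0 ≤ R)
    (hh : ∀ ξ ∈ sphere c R, ‖h ξ‖ ≤ M) (hw : w ∈ sphere c R) :
    ‖(2 * π * I : ℂ)⁻¹ • ∮ ξ in C(c, R), k ξ w • h ξ‖ ≤ R * (B * M) := by
  refine circleIntegral.norm_two_pi_i_inv_smul_integral_le_of_norm_le_const hR fun ξ hξ => ?_
  rw [norm_smul]
  exact mul_le_mul (hk.norm_le ⟨ξ, hξ⟩ ⟨w, hw⟩) (hh ξ hξ) (norm_nonneg _) B.coe_nonneg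

theorem norm_circleIntegral_sub_le (hk : IsZeroOrderKernel (fun x y : sphere c R => k x y) B)
    (hR : 0 < R) (hh : ∀ ξ ∈ sphere c R, ‖h ξ‖ ≤ M) {α : ℝ} (hα : α ∈ Ico (0 : ℝ) 1)
    (hw₁ : w₁ ∈ sphere c R) (hw₂ : w₂ ∈ sphere c R)
    (hi₁ : CircleIntegrable (fun ξ => k ξ w₁ • h ξ) c R)
    (hi₂ : CircleIntegrable (fun ξ => k ξ w₂ • h ξ) c R) :
    ‖(∮ ξ in C(c, R), k ξ w₁ • h ξ) - ∮ ξ in C(c, R), k ξ w₂ • h ξ‖ ≤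
      R ^ (1 - α) * (2 * B * M * ‖w₁ - w₂‖ ^ α) * chordIntegral (-α) := by
  rw [← circleIntegral.integral_sub hi₁ hi₂, sub_eq_add_neg 1 α]
  refine norm_circleIntegral_le_of_norm_le_rpow (neg_lt_neg hα.2) hR hw₁ fun ξ hξ hne => ?_
  have hpos : 0 < ‖ξ - w₁‖ ^ α := Real.rpow_pos_of_pos (norm_pos_iff.2 (sub_ne_zero.2 hne)) α
  have hΔ : ‖k ξ w₁ - k ξ w₂‖ * ‖ξ - w₁‖ ^ α ≤ 2 * B * ‖w₁ - w₂‖ ^ α := by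
    simpa only [Subtype.dist_eq, dist_eq_norm] using
      hk.norm_sub_mul_rpow_le (Ico_subset_Icc_self hα) ⟨ξ, hξ⟩ ⟨w₁, hw₁⟩ ⟨w₂, hw₂⟩
  rw [← sub_smul, norm_smul, Real.rpow_neg (norm_nonneg _), ← div_eq_mul_inv, le_div_iff₀ hpos]
  calc ‖k ξ w₁ - k ξ w₂‖ * ‖h ξ‖ * ‖ξ - w₁‖ ^ α
      = ‖k ξ w₁ - k ξ w₂‖ * ‖ξ - w₁‖ ^ α * ‖h ξ‖ := by ring
    _ ≤ 2 * B * ‖w₁ - w₂‖ ^ α * M :=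
        mul_le_mul hΔ (hh ξ hξ) (norm_nonneg _) ((by positivity : (0 : ℝ) ≤ _).trans hΔ)
    _ = 2 * B * M * ‖w₁ - w₂‖ ^ α := by ring

theorem norm_two_pi_I_inv_smul_circleIntegral_sub_le
    (hk : IsZeroOrderKernel (fun x y : sphere c R => k x y) B) (hR : 0 < R)
    (hh : ∀ ξ ∈ sphere c R, ‖h ξ‖ ≤ M) {α : ℝ} (hα : α ∈ Ico (0 : ℝ) 1)
    (hw₁ : w₁ ∈ sphere c R) (hw₂ : w₂ ∈ sphere c R)
    (hi₁ : CircleIntegrable (fun ξ => k ξ w₁ • h ξ) c R)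
    (hi₂ : CircleIntegrable (fun ξ => k ξ w₂ • h ξ) c R) :
    ‖((2 * π * I : ℂ)⁻¹ • ∮ ξ in C(c, R), k ξ w₁ • h ξ) -
        (2 * π * I : ℂ)⁻¹ • ∮ ξ in C(c, R), k ξ w₂ • h ξ‖ ≤
      R ^ (1 - α) * (B * M * ‖w₁ - w₂‖ ^ α) * (chordIntegral (-α) / π) := by
  have hnorm : ‖(2 * π * I : ℂ)⁻¹‖ = (2 * π)⁻¹ := by
    simp [abs_of_pos Real.pi_pos]
  rw [← smul_sub, norm_smul, hnorm]
  calc (2 * π)⁻¹ * ‖(∮ ξ in C(c, R), k ξ w₁ • h ξ) - ∮ ξ in C(c, R), k ξ w₂ • h ξ‖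
      ≤ (2 * π)⁻¹ * (R ^ (1 - α) * (2 * B * M * ‖w₁ - w₂‖ ^ α) * chordIntegral (-α)) := by
        gcongr
        exact hk.norm_circleIntegral_sub_le hR hh hα hw₁ hw₂ hi₁ hi₂
    _ = R ^ (1 - α) * (B * M * ‖w₁ - w₂‖ ^ α) * (chordIntegral (-α) / π) := by
        field_simp

end CircleIntegral

end IsZeroOrderKernel

section DifferenceQuotient

variable {X : Type*}

theorem isZeroOrderKernel_differenceQuotient {𝕜 : Type*} [PseudoMetricSpace X] [NormedField 𝕜]
    {u φ : X → 𝕜} {m K L : ℝ≥0} (hu : LipschitzWith m u) (hφ : AntilipschitzWith K φ)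
    (hφ' : LipschitzWith L φ) :
    IsZeroOrderKernel (fun x y => (u x - u y) / (φ x - φ y)) (m * K * (1 + K * L)) := by
  have hu' (x y : X) : ‖u x - u y‖ ≤ m * dist x y := by
    simpa only [dist_eq_norm] using hu.dist_le_mul x y
  have hL (x y : X) : ‖φ x - φ y‖ ≤ L * dist x y := by
    simpa only [dist_eq_norm] using hφ'.dist_le_mul x y
  have hK (x y : X) : dist x y ≤ K * ‖φ x - φ y‖ := by
    simpa only [dist_eq_norm] using hφ.le_mul_dist x y
  have hle (x y : X) : ‖u x - u y‖ ≤ m * K * ‖φ x - φ y‖ :=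
    (hu' x y).trans (by rw [mul_assoc]; gcongr; exact hK x y)
  have hdiv (x y : X) : ‖(u x - u y) / (φ x - φ y)‖ ≤ m * K := by
    rw [norm_div]
    exact div_le_of_le_mul₀ (norm_nonneg _) (by positivity) (hle x y)
  have hcancel (x y : X) : (u x - u y) / (φ x - φ y) * (φ x - φ y) = u x - u y :=
    div_mul_cancel_of_imp fun h => norm_le_zero_iff.1 (by simpa [h] using hle x y)
  refine ⟨fun x y => (hdiv x y).trans ?_, fun x y₁ y₂ => ?_⟩
  · push_cast
    exact le_mul_of_one_le_right (by positivity) (le_add_of_nonneg_right (by positivity))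
  · set q₁ := (u x - u y₁) / (φ x - φ y₁)
    set q₂ := (u x - u y₂) / (φ x - φ y₂)
    have hkey : (q₁ - q₂) * (φ x - φ y₁) = (u y₂ - u y₁) - q₂ * (φ y₂ - φ y₁) := by
      linear_combination hcancel x y₁ - hcancel x y₂
    calc ‖q₁ - q₂‖ * dist x y₁
        ≤ ‖q₁ - q₂‖ * (K * ‖φ x - φ y₁‖) := by gcongr; exact hK x y₁
      _ = K * ‖(u y₂ - u y₁) - q₂ * (φ y₂ - φ y₁)‖ := by rw [← hkey, norm_mul]; ring
      _ ≤ K * (m * dist y₂ y₁ + m * K * (L * dist y₂ y₁)) := by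
          gcongr
          exact norm_sub_le_of_le (hu' y₂ y₁) (norm_mul_le_of_le (hdiv x y₂) (hL y₂ y₁))
      _ = (m * K * (1 + K * L) : ℝ≥0) * dist y₁ y₂ := by
          rw [dist_comm]
          push_cast
          ring

/-- The kernel `conj (φ x - φ y) / (φ x - φ y)`, which is the kernel of `I1Int` when `φ` is the
boundary map. On the diagonal, division by zero makes it `0`. -/
noncomputable def conjQuotient (φ : X → ℂ) (x y : X) : ℂ :=
  (conj (φ x) - conj (φ y)) / (φ x - φ y)

theorem norm_conjQuotient_le_one (φ : X → ℂ) (x y : X) : ‖conjQuotient φ x y‖ ≤ 1 := by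
  rw [conjQuotient, ← map_sub, norm_div, norm_conj]
  exact div_self_le_one _

theorem conjQuotient_sub_conjQuotient {φ ψ : X → ℂ} (hφ : φ.Injective)
    (hψ : ψ.Injective) (x y : X) :
    conjQuotient φ x y - conjQuotient ψ x y =
      (conj (φ x - ψ x) - conj (φ y - ψ y)) / (φ x - φ y) -
        ((φ x - ψ x) - (φ y - ψ y)) / (φ x - φ y) * conjQuotient ψ x y := by
  rcases eq_or_ne x y with rfl | hxy
  · simp [conjQuotient]
  have h₁ : φ x - φ y ≠ 0 := sub_ne_zero.2 (hφ.ne hxy)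
  have h₂ : ψ x - ψ y ≠ 0 := sub_ne_zero.2 (hψ.ne hxy)
  simp only [conjQuotient, map_sub]
  field_simp
  ring

/-- The constant in the Lipschitz dependence of `conjQuotient φ` on `φ`, for maps `φ` that are
`K`-antilipschitz and `L`-Lipschitz. -/
noncomputable def conjQuotientConst (K L : ℝ≥0) : ℝ≥0 :=
  K * (1 + K * L) * (1 + 2 * (L * K * (1 + K * L)))

theorem conjQuotientConst_pos {K : ℝ≥0} (hK : 0 < K) (L : ℝ≥0) : 0 < conjQuotientConst K L := by
  unfold conjQuotientConst
  positivity

theorem isZeroOrderKernel_conjQuotient_sub [MetricSpace X] {φ ψ : X → ℂ}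
    {m K L : ℝ≥0} (hφ : AntilipschitzWith K φ) (hφ' : LipschitzWith L φ)
    (hψ : AntilipschitzWith K ψ) (hψ' : LipschitzWith L ψ)
    (hm : LipschitzWith m fun x => φ x - ψ x) :
    IsZeroOrderKernel (fun x y => conjQuotient φ x y - conjQuotient ψ x y)
      (m * conjQuotientConst K L) := by
  have hconj {v : X → ℂ} {n : ℝ≥0} (hv : LipschitzWith n v) :
      LipschitzWith n fun x => conj (v x) :=
    one_mul n ▸ isometry_conj.lipschitz.comp hv
  have hkernel := (isZeroOrderKernel_differenceQuotient (hconj hm) hφ hφ').sub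
    ((isZeroOrderKernel_differenceQuotient hm hφ hφ').mul
      (isZeroOrderKernel_differenceQuotient (hconj hψ') hψ hψ'))
  simp only [conjQuotient_sub_conjQuotient hφ.injective hψ.injective]
  rwa [show m * conjQuotientConst K L =
    m * K * (1 + K * L) + 2 * (m * K * (1 + K * L)) * (L * K * (1 + K * L)) by
      rw [conjQuotientConst]; ring]

end DifferenceQuotient

theorem circleIntegrable_conjQuotient_smul {E : Type*} [NormedAddCommGroup E] [NormedSpace ℂ E]
    {φ : ℂ → ℂ} {h : ℂ → E} {c : ℂ} {R : ℝ}
    (hφ : ContinuousOn φ (sphere c |R|)) (hh : CircleIntegrable h c R) (w : ℂ) :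
    CircleIntegrable (fun ξ => conjQuotient φ ξ w • h ξ) c R := by
  have hφc : Continuous fun θ => φ (circleMap c R θ) :=
    hφ.comp_continuous (continuous_circleMap c R) (circleMap_mem_sphere' c R)
  have hmeas : Measurable fun θ => conjQuotient φ (circleMap c R θ) w :=
    ((continuous_conj.comp hφc).sub continuous_const).measurable.div
      (hφc.sub continuous_const).measurable
  rw [CircleIntegrable, intervalIntegrable_iff] at hh ⊢
  exact hh.bdd_smul 1 hmeas.aestronglyMeasurable
    (.of_forall fun _ => norm_conjQuotient_le_one _ _ _)

/-- The boundary parametrization `Φ_f(w) = w + Q/w + f(w)`, a perturbation of the identity on the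
unit circle. -/
noncomputable def boundaryMap (Q : ℝ) (f : ℂ → ℂ) (w : ℂ) : ℂ := w + (Q : ℂ) / w + f w

theorem boundaryMap_sub_boundaryMap (Q : ℝ) (f g : ℂ → ℂ) (w : ℂ) :
    boundaryMap Q f w - boundaryMap Q g w = f w - g w :=
  add_sub_add_left_eq_sub _ _ _

section BoundaryMap

variable {Q : ℝ} {f g : ℂ → ℂ} {K ℓ m : ℝ≥0}

theorem lipschitzOnWith_inv_sphere : LipschitzOnWith 1 (fun z : ℂ => z⁻¹) (sphere 0 1) := by
  refine .of_dist_le_mul fun z hz w hw => ?_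
  rw [dist_inv_inv₀ (ne_of_mem_sphere hz one_ne_zero) (ne_of_mem_sphere hw one_ne_zero),
    mem_sphere_zero_iff_norm.1 hz, mem_sphere_zero_iff_norm.1 hw]
  simp

theorem lipschitzOnWith_div_add (hf : LipschitzOnWith ℓ f (sphere 0 1)) :
    LipschitzOnWith (‖Q‖₊ + ℓ) (fun z => Q / z + f z) (sphere 0 1) := by
  have hQ : LipschitzOnWith ‖Q‖₊ (fun z : ℂ => Q / z) (sphere 0 1) := by
    simpa [div_eq_mul_inv, Function.comp_def] using
      (lipschitzWith_smul (Q : ℂ)).comp_lipschitzOnWith lipschitzOnWith_inv_sphere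
  exact hQ.add hf

theorem boundaryMap_eq_id_add (Q : ℝ) (f : ℂ → ℂ) :
    boundaryMap Q f = fun z => z + (Q / z + f z) :=
  funext fun _ => add_assoc _ _ _

theorem lipschitzOnWith_boundaryMap (hf : LipschitzOnWith ℓ f (sphere 0 1)) (hK : ‖Q‖₊ + ℓ ≤ K) :
    LipschitzOnWith (1 + K) (boundaryMap Q f) (sphere 0 1) := by
  rw [boundaryMap_eq_id_add]
  exact LipschitzWith.id.lipschitzOnWith.add ((lipschitzOnWith_div_add hf).weaken hK)

theorem antilipschitzWith_boundaryMap (hf : LipschitzOnWith ℓ f (sphere 0 1)) (hK : ‖Q‖₊ + ℓ ≤ K)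
    (hK₁ : K < 1) :
    AntilipschitzWith (1 - K)⁻¹ fun z : sphere (0 : ℂ) 1 => boundaryMap Q f z := by
  have hu := ((lipschitzOnWith_div_add hf).weaken hK).to_restrict
  have hadd := (AntilipschitzWith.subtype_coe (sphere (0 : ℂ) 1)).add_lipschitzWith hu
    (by rwa [inv_one])
  rw [inv_one] at hadd
  rw [boundaryMap_eq_id_add]
  exact hadd

theorem isZeroOrderKernel_conjQuotient_boundaryMap_sub (hK₁ : K < 1) (hK : ‖Q‖₊ + ℓ ≤ K)
    (hf : LipschitzOnWith ℓ f (sphere 0 1)) (hg : LipschitzOnWith ℓ g (sphere 0 1))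
    (hfg : LipschitzOnWith m (fun z => f z - g z) (sphere 0 1)) :
    IsZeroOrderKernel
      (fun x y : sphere (0 : ℂ) 1 =>
        (conjQuotient (boundaryMap Q f) - conjQuotient (boundaryMap Q g)) x y)
      (m * conjQuotientConst (1 - K)⁻¹ (1 + K)) := by
  refine isZeroOrderKernel_conjQuotient_sub (antilipschitzWith_boundaryMap hf hK hK₁)
    (lipschitzOnWith_boundaryMap hf hK).to_restrict (antilipschitzWith_boundaryMap hg hK hK₁)
    (lipschitzOnWith_boundaryMap hg hK).to_restrict ?_
  simp only [boundaryMap_sub_boundaryMap]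
  exact hfg.to_restrict

end BoundaryMap

section I1Int

variable {Q : ℝ} {f g h' : ℂ → ℂ}

theorem I1Int_eq_smul_circleIntegral (Q : ℝ) (f h' : ℂ → ℂ) (w : ℂ) :
    I1Int Q f h' w =
      (2 * π * I : ℂ)⁻¹ • ∮ ξ in C(0, 1), conjQuotient (boundaryMap Q f) ξ w • h' ξ :=
  div_eq_inv_mul _ _

theorem circleIntegrable_conjQuotient_boundaryMap_smul {ℓ : ℝ≥0}
    (hf : LipschitzOnWith ℓ f (sphere 0 1)) (hh : CircleIntegrable h' 0 1) (w : ℂ) :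
    CircleIntegrable (fun ξ => conjQuotient (boundaryMap Q f) ξ w • h' ξ) 0 1 := by
  refine circleIntegrable_conjQuotient_smul ?_ hh w
  rw [abs_one]
  exact (lipschitzOnWith_boundaryMap hf le_rfl).continuousOn

theorem circleIntegrable_conjQuotient_boundaryMap_sub_smul {ℓ : ℝ≥0}
    (hf : LipschitzOnWith ℓ f (sphere 0 1)) (hg : LipschitzOnWith ℓ g (sphere 0 1))
    (hh : CircleIntegrable h' 0 1) (w : ℂ) :
    CircleIntegrable (fun ξ =>
      (conjQuotient (boundaryMap Q f) - conjQuotient (boundaryMap Q g)) ξ w • h' ξ) 0 1 := by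
  simp only [Pi.sub_apply, sub_smul]
  exact (circleIntegrable_conjQuotient_boundaryMap_smul hf hh w).sub
    (circleIntegrable_conjQuotient_boundaryMap_smul hg hh w)

theorem I1Int_sub_I1Int {ℓ : ℝ≥0} (hf : LipschitzOnWith ℓ f (sphere 0 1))
    (hg : LipschitzOnWith ℓ g (sphere 0 1)) (hh : CircleIntegrable h' 0 1) (w : ℂ) :
    I1Int Q f h' w - I1Int Q g h' w = (2 * π * I : ℂ)⁻¹ • ∮ ξ in C(0, 1),
      (conjQuotient (boundaryMap Q f) - conjQuotient (boundaryMap Q g)) ξ w • h' ξ := by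
  simp only [I1Int_eq_smul_circleIntegral, ← smul_sub, Pi.sub_apply, sub_smul]
  rw [circleIntegral.integral_sub (circleIntegrable_conjQuotient_boundaryMap_smul hf hh w)
    (circleIntegrable_conjQuotient_boundaryMap_smul hg hh w)]

end I1Int

theorem I1_lipschitz_in_f_general {K : ℝ≥0} (hK : K < 1) {α : ℝ} (hα : α ∈ Ico (0 : ℝ) 1) :
    ∃ C : ℝ, 0 < C ∧ ∀ (Q : ℝ) (ℓ M₁ : ℝ≥0) (f g h' : ℂ → ℂ), ‖Q‖₊ + ℓ ≤ K →
      LipschitzOnWith ℓ f (sphere 0 1) → LipschitzOnWith ℓ g (sphere 0 1) →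
      LipschitzOnWith M₁ (fun z => f z - g z) (sphere 0 1) →
      CircleIntegrable h' 0 1 → ∀ M : ℝ, (∀ ξ ∈ sphere (0 : ℂ) 1, ‖h' ξ‖ ≤ M) →
      (∀ w ∈ sphere (0 : ℂ) 1, ‖I1Int Q f h' w - I1Int Q g h' w‖ ≤ C * M₁ * M) ∧
      (∀ w₁ ∈ sphere (0 : ℂ) 1, ∀ w₂ ∈ sphere (0 : ℂ) 1,
        ‖(I1Int Q f h' w₁ - I1Int Q g h' w₁) - (I1Int Q f h' w₂ - I1Int Q g h' w₂)‖
          ≤ C * M₁ * M * ‖w₁ - w₂‖ ^ α) := by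
  set κ := conjQuotientConst (1 - K)⁻¹ (1 + K)
  have hκ : 0 < κ := conjQuotientConst_pos (inv_pos.2 (tsub_pos_of_lt hK)) _
  have hJ := chordIntegral_nonneg (-α)
  refine ⟨κ * (1 + chordIntegral (-α) / π), by positivity, ?_⟩
  intro Q ℓ M₁ f g h' hQ hf hg hfg hh M hM
  have hkernel := isZeroOrderKernel_conjQuotient_boundaryMap_sub hK hQ hf hg hfg
  have hM₀ : 0 ≤ M := (norm_nonneg _).trans (hM 1 (by simp))
  simp only [I1Int_sub_I1Int hf hg hh]
  have hi := circleIntegrable_conjQuotient_boundaryMap_sub_smul (Q := Q) hf hg hh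
  refine ⟨fun w hw => ?_, fun w₁ hw₁ w₂ hw₂ => ?_⟩
  · have hsup := hkernel.norm_two_pi_I_inv_smul_circleIntegral_le zero_le_one hM hw
    refine hsup.trans ?_
    rw [NNReal.coe_mul, one_mul, mul_comm (M₁ : ℝ)]
    gcongr
    exact le_mul_of_one_le_right κ.coe_nonneg (le_add_of_nonneg_right (by positivity))
  · have hholder := hkernel.norm_two_pi_I_inv_smul_circleIntegral_sub_le one_pos hM hα hw₁ hw₂
      (hi w₁) (hi w₂)
    refine hholder.trans ?_
    rw [NNReal.coe_mul, Real.one_rpow, one_mul]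
    have : 0 ≤ κ * M₁ * M * ‖w₁ - w₂‖ ^ α := by positivity
    linarith

/-- Lipschitz dependence of `I₁` on `f`: for `ε, α ∈ (0,1)` there is
`C = C(ε,α)` such that for every `Q ∈ (0,ε]` and all `f, g` holomorphic on the
disc, with `f, f', g, g'` continuous up to the boundary and
`sup_{|z|≤1}|f'|, sup_{|z|≤1}|g'| ≤ (1-ε)/2`, and every `h` holomorphic on the
disc with `h'` continuous up to the boundary,
`‖I₁(f)h - I₁(g)h‖_{C^α(𝕋)} ≤ C·(sup_{|z|≤1}|f' - g'|)·(sup_{ξ∈𝕋}|h'|)`. -/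
theorem I1_lipschitz_in_f (ε α : ℝ) (hε : ε ∈ Set.Ioo (0:ℝ) 1)
    (hα : α ∈ Set.Ioo (0:ℝ) 1) :
    ∃ C : ℝ, 0 < C ∧
    ∀ (Q : ℝ), Q ∈ Set.Ioc (0:ℝ) ε →
    ∀ (f f' g g' h h' : ℂ → ℂ),
      DifferentiableOn ℂ f (ball (0:ℂ) 1) →
      ContinuousOn f (closedBall (0:ℂ) 1) →
      (∀ z ∈ ball (0:ℂ) 1, HasDerivAt f (f' z) z) →
      ContinuousOn f' (closedBall (0:ℂ) 1) →
      (∀ z ∈ closedBall (0:ℂ) 1, ‖f' z‖ ≤ (1 - ε) / 2) →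
      DifferentiableOn ℂ g (ball (0:ℂ) 1) →
      ContinuousOn g (closedBall (0:ℂ) 1) →
      (∀ z ∈ ball (0:ℂ) 1, HasDerivAt g (g' z) z) →
      ContinuousOn g' (closedBall (0:ℂ) 1) →
      (∀ z ∈ closedBall (0:ℂ) 1, ‖g' z‖ ≤ (1 - ε) / 2) →
      DifferentiableOn ℂ h (ball (0:ℂ) 1) →
      (∀ z ∈ ball (0:ℂ) 1, HasDerivAt h (h' z) z) →
      ContinuousOn h' (closedBall (0:ℂ) 1) →
      ∀ M₁ : ℝ, (∀ z ∈ closedBall (0:ℂ) 1, ‖f' z - g' z‖ ≤ M₁) →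
      ∀ M : ℝ, (∀ ξ ∈ sphere (0:ℂ) 1, ‖h' ξ‖ ≤ M) →
      (∀ w ∈ sphere (0:ℂ) 1,
        ‖I1Int Q f h' w - I1Int Q g h' w‖ ≤ C * M₁ * M) ∧
      (∀ w₁ ∈ sphere (0:ℂ) 1, ∀ w₂ ∈ sphere (0:ℂ) 1,
        ‖(I1Int Q f h' w₁ - I1Int Q g h' w₁)
            - (I1Int Q f h' w₂ - I1Int Q g h' w₂)‖
          ≤ C * M₁ * M * ‖w₁ - w₂‖ ^ α) := by
  let ℓ : ℝ≥0 := ⟨(1 - ε) / 2, by linarith [hε.2]⟩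
  let K : ℝ≥0 := ⟨(1 + ε) / 2, by linarith [hε.1]⟩
  obtain ⟨C, hC, hbound⟩ := I1_lipschitz_in_f_general
    (show K < 1 from (by linarith [hε.2] : (1 + ε) / 2 < 1)) (Ioo_subset_Ico_self hα)
  refine ⟨C, hC, ?_⟩
  intro Q hQ f f' g g' h h' _ hfc hf' _ hf'_le _ hgc hg' _ hg'_le _ _ hh'c M₁ hM₁
  lift M₁ to ℝ≥0 using (norm_nonneg _).trans (hM₁ 0 (by simp))
  have hQK : ‖Q‖₊ + ℓ ≤ K := by
    rw [← NNReal.coe_le_coe, NNReal.coe_add, coe_nnnorm, Real.norm_of_nonneg hQ.1.le]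
    exact (by linarith [hQ.2] : Q + (1 - ε) / 2 ≤ (1 + ε) / 2)
  have hball {z : ℂ} (hz : z ∈ ball (0 : ℂ) 1) := ball_subset_closedBall hz
  exact hbound Q ℓ M₁ f g h' hQK
    (lipschitzOnWith_sphere_of_norm_hasDerivAt_le one_ne_zero hfc hf'
      fun z hz => hf'_le z (hball hz))
    (lipschitzOnWith_sphere_of_norm_hasDerivAt_le one_ne_zero hgc hg'
      fun z hz => hg'_le z (hball hz))
    (lipschitzOnWith_sphere_of_norm_hasDerivAt_le one_ne_zero (hfc.sub hgc)
      (fun z hz => (hf' z hz).sub (hg' z hz)) fun z hz => hM₁ z (hball hz))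
    ((hh'c.mono sphere_subset_closedBall).circleIntegrable zero_le_one)
end
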